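/- Let n ≥ 2, θ > 0, and let X_1,…,X_n be i.i.d. Uniform[0,θ] random variables. Then the expectation of the mean/max statistic satisfies E[τ_n] = (n+1)/(2n), where τ_n = X̄_n / X_(n). -/

import Mathlib

open MeasureTheory ProbabilityTheory

/-- The uniform probability measure on `[0, θ]`. -/
noncomputable def uniformMeasure (θ : ℝ) : Measure ℝ :=
  ENNReal.ofReal θ⁻¹ • volume.restrict (Set.Icc 0 θ)

/-- The joint law of an i.i.d. sample of size `n` from `Uniform[0, θ]`. -/
noncomputable def iidUniform (n : ℕ) (θ : ℝ) : Measure (Fin n → ℝ) :=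
  Measure.pi fun _ => uniformMeasure θ

/-- Sample maximum. -/
noncomputable def sampleMax {n : ℕ} (x : Fin n → ℝ) : ℝ := ⨆ i, x i

/-- Empirical mean. -/
noncomputable def sampleMean {n : ℕ} (x : Fin n → ℝ) : ℝ := (∑ i, x i) / n

/-- The mean/max statistic `τ_n`. -/
noncomputable def tau {n : ℕ} (x : Fin n → ℝ) : ℝ := sampleMean x / sampleMax x

/-- The cube `[0, t]ⁿ`. -/
def cube (n : ℕ) (t : ℝ) : Set (Fin n → ℝ) := Set.univ.pi fun _ => Set.Icc 0 t

lemma mem_cube {n : ℕ} {t : ℝ} {x : Fin n → ℝ} : x ∈ cube n t ↔ ∀ i, 0 ≤ x i ∧ x i ≤ t := by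
  simp only [cube, Set.mem_univ_pi, Set.mem_Icc]

lemma measurableSet_cube (n : ℕ) (t : ℝ) : MeasurableSet (cube n t) :=
  MeasurableSet.univ_pi fun _ => measurableSet_Icc

lemma iidUniform_eq_smul_restrict (n : ℕ) {θ : ℝ} (hθ : 0 < θ) :
    iidUniform n θ = ENNReal.ofReal (θ ^ n)⁻¹ • volume.restrict (cube n θ) := by
  rw [iidUniform, cube, volume_pi, Measure.restrict_pi_pi]
  have : IsFiniteMeasure (uniformMeasure θ) := by
    unfold uniformMeasure
    exact Measure.smul_finite _ ENNReal.ofReal_ne_top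
  refine Measure.pi_eq fun s _ => ?_
  simp only [uniformMeasure, Measure.smul_apply, smul_eq_mul, Measure.pi_pi,
    Finset.prod_mul_distrib, Finset.prod_const, Finset.card_univ, Fintype.card_fin]
  rw [← ENNReal.ofReal_pow (by positivity), inv_pow]

open scoped Pointwise in
lemma smul_cube_one (n : ℕ) {t : ℝ} (ht : 0 < t) : t • cube n 1 = cube n t := by
  ext x
  rw [Set.mem_smul_set_iff_inv_smul_mem₀ ht.ne', mem_cube, mem_cube]
  refine forall_congr' fun i => ?_
  simp only [Pi.smul_apply, smul_eq_mul]
  rw [inv_mul_le_iff₀ ht, mul_one, mul_nonneg_iff_of_pos_left (inv_pos.2 ht)]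

lemma tau_smul {n : ℕ} {t : ℝ} (ht : 0 < t) (x : Fin n → ℝ) : tau (t • x) = tau x := by
  simp only [tau, sampleMean, sampleMax, Pi.smul_apply, smul_eq_mul]
  rw [← Finset.mul_sum, ← Real.mul_iSup_of_nonneg ht.le, mul_div_assoc,
    mul_div_mul_left _ _ ht.ne']

lemma setIntegral_tau_cube (n : ℕ) {t : ℝ} (ht : 0 < t) :
    ∫ x in cube n t, tau x = t ^ n * ∫ x in cube n 1, tau x := by
  have h := Measure.setIntegral_comp_smul_of_pos volume (tau (n := n)) (cube n 1) ht
  simp only [tau_smul ht, smul_cube_one n ht, Module.finrank_fin_fun, smul_eq_mul] at h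
  rw [h, mul_inv_cancel_left₀ (pow_pos ht n).ne']

lemma le_sampleMax {n : ℕ} (x : Fin n → ℝ) (i : Fin n) : x i ≤ sampleMax x :=
  le_ciSup (Set.finite_range x).bddAbove i

lemma measurable_sampleMax (n : ℕ) : Measurable (sampleMax (n := n)) :=
  Measurable.iSup fun i => measurable_pi_apply i

lemma measurable_tau (n : ℕ) : Measurable (tau (n := n)) := by
  refine Measurable.div ?_ (measurable_sampleMax n)
  unfold sampleMean
  fun_prop

lemma sampleMean_le_sampleMax {n : ℕ} [NeZero n] (x : Fin n → ℝ) :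
    sampleMean x ≤ sampleMax x := by
  rw [sampleMean, div_le_iff₀ (by exact_mod_cast NeZero.pos n)]
  calc ∑ i, x i ≤ ∑ _i : Fin n, sampleMax x := Finset.sum_le_sum fun i _ => le_sampleMax x i
    _ = sampleMax x * n := by simp [mul_comm]

lemma sampleMean_nonneg {n : ℕ} {t : ℝ} {x : Fin n → ℝ} (hx : x ∈ cube n t) :
    0 ≤ sampleMean x :=
  div_nonneg (Finset.sum_nonneg fun i _ => (mem_cube.1 hx i).1) n.cast_nonneg

lemma sampleMax_mem_Icc {n : ℕ} [NeZero n] {t : ℝ} {x : Fin n → ℝ} (hx : x ∈ cube n t) :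
    sampleMax x ∈ Set.Icc 0 t :=
  ⟨(sampleMean_nonneg hx).trans (sampleMean_le_sampleMax x),
    ciSup_le fun i => (mem_cube.1 hx i).2⟩

lemma mem_cube_inter_iff {n : ℕ} [NeZero n] {s t : ℝ} (hst : s ≤ t) {x : Fin n → ℝ} :
    x ∈ cube n t ∧ sampleMax x ≤ s ↔ x ∈ cube n s := by
  constructor
  · rintro ⟨hx, hs⟩
    exact mem_cube.2 fun i => ⟨(mem_cube.1 hx i).1, (le_sampleMax x i).trans hs⟩
  · intro hx
    exact ⟨mem_cube.2 fun i => ⟨(mem_cube.1 hx i).1, (mem_cube.1 hx i).2.trans hst⟩,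
      (sampleMax_mem_Icc hx).2⟩

lemma tau_mul_sampleMax {n : ℕ} [NeZero n] {t : ℝ} {x : Fin n → ℝ} (hx : x ∈ cube n t) :
    tau x * sampleMax x = sampleMean x := by
  rcases eq_or_ne (sampleMax x) 0 with h | h
  · rw [h, mul_zero]
    exact le_antisymm (sampleMean_nonneg hx) (h ▸ sampleMean_le_sampleMax x)
  · exact div_mul_cancel₀ _ h

lemma norm_tau_le_one {n : ℕ} [NeZero n] {t : ℝ} {x : Fin n → ℝ} (hx : x ∈ cube n t) :
    ‖tau x‖ ≤ 1 := by
  have h := (sampleMax_mem_Icc hx).1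
  rw [tau, Real.norm_of_nonneg (div_nonneg (sampleMean_nonneg hx) h)]
  exact div_le_one_of_le₀ (sampleMean_le_sampleMax x) h

instance isProbabilityMeasure_restrict_Icc_zero_one :
    IsProbabilityMeasure (volume.restrict (Set.Icc (0 : ℝ) 1)) :=
  ⟨by simp⟩

lemma restrict_cube_one (n : ℕ) :
    (volume : Measure (Fin n → ℝ)).restrict (cube n 1) =
      Measure.pi fun _ => volume.restrict (Set.Icc (0 : ℝ) 1) := by
  rw [cube, volume_pi, Measure.restrict_pi_pi]

instance isProbabilityMeasure_restrict_cube_one (n : ℕ) :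
    IsProbabilityMeasure ((volume : Measure (Fin n → ℝ)).restrict (cube n 1)) := by
  rw [restrict_cube_one]
  infer_instance

lemma setIntegral_sampleMean_cube_one (n : ℕ) [NeZero n] :
    ∫ x in cube n 1, sampleMean x = 1 / 2 := by
  have hn : (n : ℝ) ≠ 0 := by exact_mod_cast NeZero.ne n
  have hint (i : Fin n) : Integrable (fun x : Fin n → ℝ => x i) (volume.restrict (cube n 1)) := by
    refine Integrable.of_bound (measurable_pi_apply i).aestronglyMeasurable 1 ?_
    filter_upwards [ae_restrict_mem (measurableSet_cube n 1)] with x hx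
    rw [Real.norm_of_nonneg (mem_cube.1 hx i).1]
    exact (mem_cube.1 hx i).2
  have hcoord (i : Fin n) : ∫ x in cube n 1, x i = 1 / 2 := by
    rw [restrict_cube_one]
    have h := integral_comp_eval (μ := fun _ : Fin n => volume.restrict (Set.Icc (0 : ℝ) 1))
      (i := i) (f := fun y : ℝ => y) aestronglyMeasurable_id
    rw [h, integral_Icc_eq_integral_Ioc, ← intervalIntegral.integral_of_le zero_le_one,
      integral_id]
    norm_num
  simp only [sampleMean]
  rw [integral_div, integral_finsetSum _ fun i _ => hint i]
  simp only [hcoord, Finset.sum_const, Finset.card_univ, Fintype.card_fin, nsmul_eq_mul]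
  field_simp

/-- The layer-cake representation of the maximum turns the integral of `τ * (1 - max)` into an
average of the integrals of `τ` over the cubes `[0, t]ⁿ`, which scale like `t ^ n`. -/
lemma setIntegral_tau_mul_one_sub_sampleMax (n : ℕ) [NeZero n] :
    ∫ x in cube n 1, tau x * (1 - sampleMax x) = (∫ x in cube n 1, tau x) / (n + 1) := by
  let f : (Fin n → ℝ) → ℝ → ℝ := fun x t => (Set.Ici (sampleMax x)).indicator (fun _ => tau x) t
  have hf : Integrable (Function.uncurry f)
      ((volume.restrict (cube n 1)).prod (volume.restrict (Set.Ioc 0 1))) := by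
    have hmeas : Measurable (Function.uncurry f) := by
      have : Function.uncurry f = Set.indicator {p : (Fin n → ℝ) × ℝ | sampleMax p.1 ≤ p.2}
          fun p => tau p.1 := by
        ext p
        simp [f, Function.uncurry, Set.indicator_apply]
      rw [this]
      exact ((measurable_tau n).comp measurable_fst).indicator
        (measurableSet_le ((measurable_sampleMax n).comp measurable_fst) measurable_snd)
    refine Integrable.of_bound hmeas.aestronglyMeasurable 1 ?_
    rw [Measure.prod_restrict]
    filter_upwards [ae_restrict_mem ((measurableSet_cube n 1).prod measurableSet_Ioc)] with p hp
    exact (norm_indicator_le_norm_self (fun _ => tau p.1) p.2).trans (norm_tau_le_one hp.1)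
  have hleft : ∫ x in cube n 1, tau x * (1 - sampleMax x) =
      ∫ x in cube n 1, ∫ t in Set.Ioc 0 1, f x t := by
    refine setIntegral_congr_fun (measurableSet_cube n 1) fun x hx => ?_
    obtain ⟨h0, h1⟩ := sampleMax_mem_Icc hx
    simp only [f]
    rw [← integral_Icc_eq_integral_Ioc, setIntegral_indicator measurableSet_Ici,
      setIntegral_const]
    have : Set.Icc 0 1 ∩ Set.Ici (sampleMax x) = Set.Icc (sampleMax x) 1 := by
      ext t
      simp only [Set.mem_inter_iff, Set.mem_Icc, Set.mem_Ici]
      exact ⟨fun h => ⟨h.2, h.1.2⟩, fun h => ⟨⟨h0.trans h.1, h.2⟩, h.1⟩⟩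
    rw [this, Real.volume_real_Icc_of_le h1, smul_eq_mul, mul_comm]
  have hright : ∀ t ∈ Set.Ioc (0 : ℝ) 1,
      ∫ x in cube n 1, f x t = t ^ n * ∫ x in cube n 1, tau x := by
    intro t ht
    rw [← setIntegral_tau_cube n ht.1]
    have hft : (fun x => f x t) = Set.indicator {x | sampleMax x ≤ t} tau := by
      ext x
      simp [f, Set.indicator_apply]
    have hset : cube n 1 ∩ {x | sampleMax x ≤ t} = cube n t :=
      Set.ext fun x => mem_cube_inter_iff ht.2
    rw [hft, setIntegral_indicator (measurableSet_le (measurable_sampleMax n) measurable_const),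
      hset]
  rw [hleft, integral_integral_swap hf, setIntegral_congr_fun measurableSet_Ioc hright,
    integral_mul_const, ← intervalIntegral.integral_of_le zero_le_one, integral_pow]
  simp
  ring

lemma setIntegral_tau_cube_one (n : ℕ) [NeZero n] :
    ∫ x in cube n 1, tau x = ((n : ℝ) + 1) / (2 * n) := by
  have hn : (n : ℝ) ≠ 0 := by exact_mod_cast NeZero.ne n
  have htau : Integrable tau (volume.restrict (cube n 1)) := by
    refine Integrable.of_bound (measurable_tau n).aestronglyMeasurable 1 ?_
    filter_upwards [ae_restrict_mem (measurableSet_cube n 1)] with x hx using norm_tau_le_one hx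
  have hmean : IntegrableOn sampleMean (cube n 1) := by
    refine not_not.1 fun h => ?_
    have := setIntegral_sampleMean_cube_one n
    rw [integral_undef h] at this
    norm_num at this
  have hsub : ∫ x in cube n 1, tau x * (1 - sampleMax x) =
      (∫ x in cube n 1, tau x) - 1 / 2 := by
    rw [← setIntegral_sampleMean_cube_one n, ← integral_sub htau hmean]
    refine setIntegral_congr_fun (measurableSet_cube n 1) fun x hx => ?_
    simp only [mul_sub, mul_one, tau_mul_sampleMax hx]
  rw [setIntegral_tau_mul_one_sub_sampleMax] at hsub
  field_simp at hsub ⊢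
  linarith

/-- Under an i.i.d. `Uniform[0,θ]` sample, `E[τ_n] = (n+1)/(2n)`. -/
theorem tau_expectation_uniform
    (n : ℕ) (hn : 2 ≤ n) (θ : ℝ) (hθ : 0 < θ) :
    ∫ x, tau x ∂iidUniform n θ = ((n : ℝ) + 1) / (2 * n) := by
  have : NeZero n := ⟨by omega⟩
  have hpow : 0 < θ ^ n := pow_pos hθ n
  rw [iidUniform_eq_smul_restrict n hθ, integral_smul_measure, setIntegral_tau_cube n hθ,
    ENNReal.toReal_ofReal (inv_pos.2 hpow).le, smul_eq_mul, inv_mul_cancel_left₀ hpow.ne',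
    setIntegral_tau_cube_one]
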